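/- arXiv:2605.09130 — 3 statements merged into one kernel-verified Lean document; each statement's English description precedes it below -/
import Mathlib

section
/- Let R = F2[x,y,z]/(xy + xz + yz). The images in R of the monomials x^i z^j for i, j ≥ 0, together with the images of the monomials y^m z^n for m ≥ 1, n ≥ 0, form a basis of R as an F2-vector space. -/
/-!
STATEMENT 0: Let `R = F2[x,y,z]/(xy + xz + yz)`.  The images in `R` of the monomials
`x^i z^j` for `i, j ≥ 0`, together with the images of the monomials `y^m z^n` for
`m ≥ 1, n ≥ 0`, form a basis of `R` as an `F2`-vector space.
-/

noncomputable section

open MvPolynomial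

/-- The field with two elements. -/
abbrev F2 : Type := ZMod 2

/-- The polynomial ring `F2[x,y,z]`, with `x = X 0`, `y = X 1`, `z = X 2`. -/
abbrev P3 : Type := MvPolynomial (Fin 3) F2

/-- The relation `xy + xz + yz`. -/
def relP : P3 := X 0 * X 1 + X 0 * X 2 + X 1 * X 2

/-- The ring `R = F2[x,y,z]/(xy + xz + yz)`. -/
abbrev Rring : Type := P3 ⧸ Ideal.span {relP}

/-- The quotient map `F2[x,y,z] → R`. -/
def pr : P3 →ₐ[F2] Rring := Ideal.Quotient.mkₐ F2 (Ideal.span {relP})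

/-- The family of images in `R` of the monomials `x^i z^j` (`i, j ≥ 0`) and
`y^m z^n` (`m ≥ 1`, `n ≥ 0`, encoded as `m = m' + 1` with `m' ≥ 0`). -/
def basisFam : (ℕ × ℕ) ⊕ (ℕ × ℕ) → Rring
  | .inl (i, j) => pr (X 0 ^ i * X 2 ^ j)
  | .inr (m, n) => pr (X 1 ^ (m + 1) * X 2 ^ n)

/-- Exponent vectors of the basis monomials. -/
def expo : (ℕ × ℕ) ⊕ (ℕ × ℕ) → (Fin 3 →₀ ℕ)
  | .inl (i, j) => Finsupp.single 0 i + Finsupp.single 2 j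
  | .inr (m, n) => Finsupp.single 1 (m + 1) + Finsupp.single 2 n

theorem expo_injective : Function.Injective expo := by
  rintro (⟨i, j⟩ | ⟨i, j⟩) (⟨k, l⟩ | ⟨k, l⟩) h <;>
  · have h0 := DFunLike.congr_fun h 0
    have h1 := DFunLike.congr_fun h 1
    have h2 := DFunLike.congr_fun h 2
    simp [expo] at h0 h1 h2
    try simp [h0, h1, h2]

theorem basisFam_eq (a : (ℕ × ℕ) ⊕ (ℕ × ℕ)) : basisFam a = pr (monomial (expo a) 1) := by
  rcases a with ⟨i, j⟩ | ⟨i, j⟩ <;>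
    simp only [basisFam, expo, X_pow_eq_monomial, monomial_mul, one_mul]

theorem degree_relP :
    MonomialOrder.lex.degree relP = Finsupp.single 0 1 + Finsupp.single 1 1 := by
  have e : ∀ i j : Fin 3, MonomialOrder.lex.degree (X i * X j : P3)
      = Finsupp.single i 1 + Finsupp.single j 1 := by
    intro i j
    rw [MonomialOrder.degree_mul (X_ne_zero i) (X_ne_zero j), MonomialOrder.degree_X,
      MonomialOrder.degree_X]
  have l1 : MonomialOrder.lex.toSyn (MonomialOrder.lex.degree (X 0 * X 2 : P3)) <
      MonomialOrder.lex.toSyn (MonomialOrder.lex.degree (X 0 * X 1 : P3)) := by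
    rw [e, e, map_add, map_add]
    have : MonomialOrder.lex.toSyn (Finsupp.single (2 : Fin 3) 1) <
        MonomialOrder.lex.toSyn (Finsupp.single (1 : Fin 3) 1) := by
      rw [MonomialOrder.lex_lt_iff, Finsupp.Lex.single_lt_iff]; decide
    gcongr
  have d1 := MonomialOrder.degree_add_of_lt l1
  have l2 : MonomialOrder.lex.toSyn (MonomialOrder.lex.degree (X 1 * X 2 : P3)) <
      MonomialOrder.lex.toSyn (MonomialOrder.lex.degree (X 0 * X 1 + X 0 * X 2 : P3)) := by
    rw [d1, e, e, add_comm (Finsupp.single 0 1), map_add, map_add]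
    have : MonomialOrder.lex.toSyn (Finsupp.single (2 : Fin 3) 1) <
        MonomialOrder.lex.toSyn (Finsupp.single (0 : Fin 3) 1) := by
      rw [MonomialOrder.lex_lt_iff, Finsupp.Lex.single_lt_iff]; decide
    gcongr
  rw [relP, MonomialOrder.degree_add_of_lt l2, d1, e]

theorem linInd_basisFam : LinearIndependent F2 basisFam := by
  have hb : basisFam = pr.toLinearMap ∘ (fun a => (monomial (expo a) 1 : P3)) :=
    funext basisFam_eq
  rw [hb]
  apply LinearIndependent.map
  · have := (basisMonomials (Fin 3) F2).linearIndependent.comp expo expo_injective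
    simpa [Function.comp_def] using this
  · rw [Submodule.disjoint_def]
    intro p hp hk
    have hs : ∀ d ∈ p.support, d 0 = 0 ∨ d 1 = 0 := by
      clear hk
      intro d hd
      by_contra! hne
      rw [mem_support_iff] at hd
      apply hd
      have hle : Submodule.span F2 (Set.range fun a => (monomial (expo a) 1 : P3)) ≤
          LinearMap.ker (lcoeff F2 d) := by
        rw [Submodule.span_le]
        rintro _ ⟨a, rfl⟩
        simp only [SetLike.mem_coe, LinearMap.mem_ker, lcoeff_apply, coeff_monomial]
        rw [if_neg]
        rintro rfl
        rcases a with ⟨i, j⟩ | ⟨i, j⟩ <;> simp [expo] at hne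
      exact hle hp
    by_contra hp0
    have hm : p ∈ Ideal.span {relP} := by
      rw [LinearMap.mem_ker] at hk
      exact Ideal.Quotient.eq_zero_iff_mem.mp hk
    obtain ⟨h, rfl⟩ := Ideal.mem_span_singleton'.mp hm
    have := hs _ (MonomialOrder.lex.degree_mem_support hp0)
    rw [MonomialOrder.degree_mul' hp0, degree_relP] at this
    simp at this

theorem rel_R : pr (X 0) * pr (X 1) = pr (X 0) * pr (X 2) + pr (X 1) * pr (X 2) := by
  have h : pr relP = 0 :=
    Ideal.Quotient.eq_zero_iff_mem.mpr (Ideal.mem_span_singleton_self relP)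
  have h2 : (2 : Rring) = 0 := by
    have := congrArg (algebraMap F2 Rring) (show (2 : F2) = 0 from rfl)
    rwa [map_ofNat, map_zero] at this
  simp only [relP, map_add, map_mul] at h
  linear_combination h - (pr (X 0) * pr (X 2) + pr (X 1) * pr (X 2)) * h2

theorem span_basisFam : ⊤ ≤ Submodule.span F2 (Set.range basisFam) := by
  set S := Submodule.span F2 (Set.range basisFam) with hS
  have hx : ∀ i j : ℕ, pr (X 0) ^ i * pr (X 2) ^ j ∈ S := fun i j =>
    Submodule.subset_span ⟨.inl (i, j), by simp [basisFam]⟩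
  have hy : ∀ i j : ℕ, pr (X 1) ^ (i + 1) * pr (X 2) ^ j ∈ S := fun i j =>
    Submodule.subset_span ⟨.inr (i, j), by simp [basisFam]⟩
  have hxy : ∀ m n : ℕ, pr (X 0) * (pr (X 1) ^ (m + 1) * pr (X 2) ^ n) ∈ S := by
    intro m
    induction m with
    | zero =>
      intro n
      have := S.add_mem (hx 1 (n + 1)) (hy 0 (n + 1))
      convert this using 1
      linear_combination pr (X 2) ^ n * rel_R
    | succ m ih =>
      intro n
      have := S.add_mem (ih (n + 1)) (hy (m + 1) (n + 1))
      convert this using 1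
      linear_combination pr (X 1) ^ (m + 1) * pr (X 2) ^ n * rel_R
  have hyx : ∀ m n : ℕ, pr (X 1) * (pr (X 0) ^ m * pr (X 2) ^ n) ∈ S := by
    intro m
    induction m with
    | zero => intro n; simpa using hy 0 n
    | succ m ih =>
      intro n
      have := S.add_mem (ih (n + 1)) (hx (m + 1) (n + 1))
      convert this using 1
      linear_combination pr (X 0) ^ m * pr (X 2) ^ n * rel_R
  have hmul : ∀ (k : Fin 3) (r : Rring), r ∈ S → pr (X k) * r ∈ S := by
    intro k r hr
    have hle : S ≤ S.comap (LinearMap.mulLeft F2 (pr (X k))) := by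
      conv_lhs => rw [hS]
      rw [Submodule.span_le]
      rintro _ ⟨a, rfl⟩
      simp only [Submodule.comap_coe, Set.mem_preimage, LinearMap.mulLeft_apply, SetLike.mem_coe]
      rcases a with ⟨i, j⟩ | ⟨i, j⟩ <;> simp only [basisFam, map_mul, map_pow] <;> fin_cases k
      · convert hx (i + 1) j using 1; simp only [Fin.zero_eta]; ring
      · exact hyx i j
      · convert hx i (j + 1) using 1; simp only [Fin.reduceFinMk]; ring
      · exact hxy i j
      · convert hy (i + 1) j using 1; simp only [Fin.mk_one]; ring
      · convert hy i (j + 1) using 1; simp only [Fin.reduceFinMk]; ring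
    exact hle hr
  rintro r -
  obtain ⟨p, rfl⟩ : ∃ p, pr p = r := Ideal.Quotient.mk_surjective r
  induction p using MvPolynomial.induction_on with
  | C a =>
    have h1 : (1 : Rring) ∈ S := by simpa using hx 0 0
    have := S.smul_mem a h1
    rwa [← map_one pr, ← map_smul, smul_eq_C_mul, mul_one] at this
  | add p q hp hq => rw [map_add]; exact S.add_mem hp hq
  | mul_X p k hp => rw [map_mul, mul_comm]; exact hmul k _ hp

/-- The monomials `x^i z^j` (`i, j ≥ 0`) together with the monomials `y^m z^n`
(`m ≥ 1`, `n ≥ 0`) form an `F2`-basis of `R = F2[x,y,z]/(xy + xz + yz)`. -/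
theorem images_of_monomials_form_basis :
    ∃ b : Module.Basis ((ℕ × ℕ) ⊕ (ℕ × ℕ)) F2 Rring, ⇑b = basisFam := by
  exact ⟨Module.Basis.mk linInd_basisFam span_basisFam, Module.Basis.coe_mk _ _⟩

end
end

section
/- Let R = F2[x,y,z]/(xy + xz + yz). The F2-linear map F2[x,z] × F2[y,z] → R sending a pair of two-variable polynomials (f, g) to the image in R of f(x,z) + y·g(y,z) is a bijection; that is, R decomposes as an F2-vector space as F2[x,z] ⊕ y·F2[y,z]. -/
/-!
STATEMENT 1: Let `R = F2[x,y,z]/(xy + xz + yz)`.  The `F2`-linear map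
`F2[x,z] × F2[y,z] → R` sending `(f, g)` to the image in `R` of `f(x,z) + y·g(y,z)`
is a bijection; that is, `R ≅ F2[x,z] ⊕ y·F2[y,z]` as `F2`-vector spaces.
-/

noncomputable section

open MvPolynomial

/-- Polynomials in two variables over `F2`. -/
abbrev P2 : Type := MvPolynomial (Fin 2) F2

lemma aux_dvd (f : P2) : (X 1 : P2) ∣ f - aeval ![X 0, 0] f := by
  induction f using MvPolynomial.induction_on with
  | C a => simp [algebraMap_eq]
  | add p q hp hq =>
    have := dvd_add hp hq
    rw [map_add]
    convert this using 1
    ring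
  | mul_X p i hp =>
    fin_cases i
    · have := Dvd.dvd.mul_right hp (X 0)
      simp only [map_mul, aeval_X]
      convert this using 1
      simp
      ring
    · simp

lemma aux_step (f g : P2)
    (h : relP ∣ aeval ![X 0, X 2] f + X 1 * aeval ![X 1, X 2] g) :
    ∃ f' g' : P2, f = X 1 * f' ∧ g = X 1 * g' ∧
      relP ∣ aeval ![X 0, X 2] f' + X 1 * aeval ![X 1, X 2] g' := by
  have comp : ∀ (v : Fin 3 → P2) (a b : Fin 3) (p : P2),
      aeval v (aeval ![(X a : P3), X b] p) = aeval ![v a, v b] p := by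
    intro v a b p
    have : ((aeval v).comp (aeval ![(X a : P3), X b]) : P2 →ₐ[F2] P2) = aeval ![v a, v b] := by
      apply MvPolynomial.algHom_ext
      intro i
      fin_cases i <;> simp
    exact DFunLike.congr_fun this p
  have key : ∀ v : Fin 3 → P2, v 0 * v 1 + v 0 * v 2 + v 1 * v 2 = 0 →
      aeval ![v 0, v 2] f + v 1 * aeval ![v 1, v 2] g = 0 := by
    intro v hv
    have h1 := map_dvd (aeval v : P3 →ₐ[F2] P2) h
    have h2 : aeval v relP = 0 := by simpa [relP] using hv
    rw [h2, zero_dvd_iff] at h1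
    simpa only [map_add, map_mul, aeval_X, comp] using h1
  have hf : aeval ![(X 0 : P2), 0] f = 0 := by
    simpa using key ![X 0, 0, 0] (by simp)
  have hf0 : aeval ![(0 : P2), 0] f = 0 := by
    have : ((aeval ![(0 : P2), 0]).comp (aeval ![(X 0 : P2), 0]) : P2 →ₐ[F2] P2)
        = aeval ![(0 : P2), 0] := by
      apply MvPolynomial.algHom_ext
      intro i
      fin_cases i <;> simp
    rw [← this, AlgHom.comp_apply, hf, map_zero]
  have hg : aeval ![(X 0 : P2), 0] g = 0 := by
    have := key ![0, X 0, 0] (by simp)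
    simp only [Matrix.cons_val_zero, Matrix.cons_val_one, Matrix.cons_val, hf0, zero_add] at this
    exact (mul_eq_zero.mp this).resolve_left (X_ne_zero 0)
  obtain ⟨f', hf'⟩ := aux_dvd f
  obtain ⟨g', hg'⟩ := aux_dvd g
  rw [hf, sub_zero] at hf'
  rw [hg, sub_zero] at hg'
  refine ⟨f', g', hf', hg', ?_⟩
  obtain ⟨q, hq⟩ := h
  have e : X 2 * (aeval ![X 0, X 2] f' + X 1 * aeval ![X 1, X 2] g') = relP * q := by
    rw [← hq, hf', hg']
    simp
    ring
  have hp : Prime (X 2 : P3) := X_prime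
  have hn : ¬ (X 2 : P3) ∣ relP := by
    intro hd
    have := map_dvd (aeval ![(1 : F2), 1, 0] : P3 →ₐ[F2] F2) hd
    simp [relP] at this
  obtain ⟨r, rfl⟩ := (hp.dvd_or_dvd (Dvd.intro _ e)).resolve_left hn
  refine ⟨r, mul_left_cancel₀ hp.ne_zero ?_⟩
  rw [e]; ring

lemma aux_pow (n : ℕ) : ∀ f g : P2,
    relP ∣ aeval ![X 0, X 2] f + X 1 * aeval ![X 1, X 2] g →
    (X 1 : P2) ^ n ∣ f ∧ (X 1 : P2) ^ n ∣ g := by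
  induction n with
  | zero => intro f g _; simp
  | succ n ih =>
    intro f g h
    obtain ⟨f', g', rfl, rfl, h'⟩ := aux_step f g h
    obtain ⟨a, b⟩ := ih f' g' h'
    rw [pow_succ']
    exact ⟨mul_dvd_mul_left _ a, mul_dvd_mul_left _ b⟩

lemma aux_zero (f : P2) (h : ∀ n, (X 1 : P2) ^ n ∣ f) : f = 0 := by
  by_contra hf
  obtain ⟨n, hn⟩ := FiniteMultiplicity.of_prime_left ((X_prime : Prime (X 1 : P2))) hf
  exact hn (h _)

/-- The map. -/
def LL : (P2 × P2) →ₗ[F2] Rring :=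
  pr.toLinearMap ∘ₗ ((aeval ![X 0, X 2] : P2 →ₐ[F2] P3).toLinearMap.coprod
    (LinearMap.mulLeft F2 (X 1 : P3) ∘ₗ (aeval ![X 1, X 2] : P2 →ₐ[F2] P3).toLinearMap))

lemma LL_apply (f g : P2) :
    LL (f, g) = pr (aeval ![X 0, X 2] f + X 1 * aeval ![X 1, X 2] g) := by
  simp [LL]

lemma pr_rel : pr (X 0) * pr (X 1) = pr (X 2) * pr (X 0) + pr (X 2) * pr (X 1) := by
  have h : pr relP = 0 := by
    simp only [pr, Ideal.Quotient.mkₐ_eq_mk]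
    exact Ideal.Quotient.eq_zero_iff_mem.mpr (Ideal.mem_span_singleton_self _)
  have h2 : (2 : Rring) = 0 := by
    have := map_ofNat (algebraMap F2 Rring) 2
    rw [← this, show (OfNat.ofNat 2 : F2) = 0 from rfl, map_zero]
  simp only [relP, map_add, map_mul] at h
  linear_combination h - (pr (X 0) * pr (X 2) + pr (X 1) * pr (X 2)) * h2

lemma memA (f : P2) : pr (aeval ![X 0, X 2] f) ∈ LinearMap.range LL :=
  ⟨(f, 0), by simp [LL_apply]⟩

lemma memB (g : P2) : pr (X 1) * pr (aeval ![X 1, X 2] g) ∈ LinearMap.range LL :=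
  ⟨(0, g), by simp [LL_apply]⟩

lemma memZ {r : Rring} (hr : r ∈ LinearMap.range LL) : pr (X 2) * r ∈ LinearMap.range LL := by
  obtain ⟨⟨f, g⟩, rfl⟩ := hr
  refine ⟨(X 1 * f, X 1 * g), ?_⟩
  simp only [LL_apply, map_add, map_mul, aeval_X, Matrix.cons_val_one, Matrix.cons_val_zero]
  ring

lemma memXB (g : P2) :
    pr (X 0) * (pr (X 1) * pr (aeval ![X 1, X 2] g)) ∈ LinearMap.range LL := by
  induction g using MvPolynomial.induction_on with
  | C a =>
    have := (LinearMap.range LL).add_mem (memZ (memA (C a * X 0))) (memZ (memB (C a)))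
    convert this using 1
    simp only [map_mul, aeval_X, Matrix.cons_val_zero, algHom_C, AlgHom.commutes]
    linear_combination (algebraMap F2 Rring a) * pr_rel
  | add p q hp hq =>
    simp only [map_add, mul_add]
    exact (LinearMap.range LL).add_mem hp hq
  | mul_X p i hp =>
    fin_cases i
    · have := (LinearMap.range LL).add_mem (memZ hp) (memZ (memB (p * X 0)))
      convert this using 1
      simp [-aeval_eq_bind₁]
      linear_combination (pr (X 1) * pr (aeval ![X 1, X 2] p)) * pr_rel
    · convert memZ hp using 1
      simp
      ring

lemma memYA (f : P2) :
    pr (X 1) * pr (aeval ![X 0, X 2] f) ∈ LinearMap.range LL := by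
  induction f using MvPolynomial.induction_on with
  | C a =>
    convert memB (C a) using 1
    simp
  | add p q hp hq =>
    simp only [map_add, mul_add]
    exact (LinearMap.range LL).add_mem hp hq
  | mul_X p i hp =>
    fin_cases i
    · have := (LinearMap.range LL).add_mem (memZ (memA (p * X 0))) (memZ hp)
      convert this using 1
      simp [-aeval_eq_bind₁]
      linear_combination (pr (aeval ![X 0, X 2] p)) * pr_rel
    · convert memZ hp using 1
      simp
      ring

lemma mem_all (p : P3) : pr p ∈ LinearMap.range LL := by
  induction p using MvPolynomial.induction_on with
  | C a =>
    convert memA (C a) using 1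
    simp
  | add p q hp hq =>
    rw [map_add]
    exact (LinearMap.range LL).add_mem hp hq
  | mul_X p i hp =>
    rw [map_mul, mul_comm]
    fin_cases i
    · obtain ⟨⟨f, g⟩, h⟩ := hp
      rw [← h]
      convert (LinearMap.range LL).add_mem (memA (f * X 0)) (memXB g) using 1
      simp [LL_apply]
      ring
    · obtain ⟨⟨f, g⟩, h⟩ := hp
      rw [← h]
      convert (LinearMap.range LL).add_mem (memYA f) (memB (g * X 0)) using 1
      simp [LL_apply]
      ring
    · exact memZ hp

/-- The `F2`-linear map `F2[x,z] × F2[y,z] → R`, `(f, g) ↦ f(x,z) + y·g(y,z)`,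
is a bijection: `R = F2[x,z] ⊕ y·F2[y,z]` as an `F2`-vector space. -/
theorem decomposition_linear_map_bijective :
    ∃ L : (P2 × P2) →ₗ[F2] Rring,
      (∀ f g : P2,
        L (f, g) = pr (aeval ![X 0, X 2] f + X 1 * aeval ![X 1, X 2] g)) ∧
      Function.Bijective L := by
  refine ⟨LL, LL_apply, ?_, ?_⟩
  · rw [injective_iff_map_eq_zero]
    rintro ⟨f, g⟩ h
    rw [LL_apply] at h
    have hd : relP ∣ aeval ![X 0, X 2] f + X 1 * aeval ![X 1, X 2] g := by
      rw [← Ideal.mem_span_singleton]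
      exact Ideal.Quotient.eq_zero_iff_mem.mp h
    rw [aux_zero f fun n => (aux_pow n f g hd).1, aux_zero g fun n => (aux_pow n f g hd).2]
    rfl
  · intro r
    obtain ⟨p, rfl⟩ := Ideal.Quotient.mk_surjective r
    exact mem_all p

end
end

section
/- Let A = F2[a0, a1, aβ, u0, u1, uβ], let q = a0·u1·uβ + a1·u0·uβ + aβ·u0·u1, and let T be the localization of A/(q) at the multiplicative set generated by the images of u0, u1, uβ. Set t0 = a0·u0^{-1} and t1 = aβ·uβ^{-1} in T. Then (u0·u1·uβ)·t0·t1·(t0 + t1) = a0·a1·aβ in T. -/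
noncomputable section

open MvPolynomial

/-- The polynomial ring `A = F2[a0, a1, aβ, u0, u1, uβ]` with
`a0 = X 0`, `a1 = X 1`, `aβ = X 2`, `u0 = X 3`, `u1 = X 4`, `uβ = X 5`. -/
abbrev A6 : Type := MvPolynomial (Fin 6) F2

/-- The Euler-class relation `q = a0·u1·uβ + a1·u0·uβ + aβ·u0·u1`. -/
def qrel : A6 := X 0 * X 4 * X 5 + X 1 * X 3 * X 5 + X 2 * X 3 * X 4

/-- The quotient `A/(q)`. -/
abbrev Aq : Type := A6 ⧸ Ideal.span {qrel}

/-- The quotient map `A → A/(q)`. -/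
def aq : A6 →+* Aq := Ideal.Quotient.mk (Ideal.span {qrel})

/-- The multiplicative set generated by the images of `u0, u1, uβ` in `A/(q)`. -/
def Su : Submonoid Aq := Submonoid.closure {aq (X 3), aq (X 4), aq (X 5)}

/-- `T`, the localization of `A/(q)` at `u0, u1, uβ`. -/
abbrev T : Type := Localization Su

/-- `u0` as an element of the multiplicative set. -/
def u0S : Su := ⟨aq (X 3), Submonoid.subset_closure (by simp)⟩

/-- `u1` as an element of the multiplicative set. -/
def u1S : Su := ⟨aq (X 4), Submonoid.subset_closure (by simp)⟩

/-- `uβ` as an element of the multiplicative set. -/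
def uβS : Su := ⟨aq (X 5), Submonoid.subset_closure (by simp)⟩

/-- `t0 = a0·u0⁻¹` in `T`. -/
def t0 : T := Localization.mk (aq (X 0)) u0S

/-- `t1 = aβ·uβ⁻¹` in `T`. -/
def t1 : T := Localization.mk (aq (X 2)) uβS

theorem dickson_aux {R : Type*} [CommRing R] (h2 : (2 : R) = 0) (a0 a1 ab u0 u1 ub s0 s1 : R)
    (h0 : IsUnit u0) (hb : IsUnit ub) (e0 : s0 * u0 = a0) (e1 : s1 * ub = ab)
    (hq : a0 * u1 * ub + a1 * u0 * ub + ab * u0 * u1 = 0) :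
    u0 * u1 * ub * (s0 * s1 * (s0 + s1)) = a0 * a1 * ab := by
  apply (h0.mul hb).mul_left_cancel
  subst e0 e1
  linear_combination (s0 * u0 * s1 * ub) * hq - (s0 * u0 * s1 * ub * a1 * u0 * ub) * h2

set_option synthInstance.maxHeartbeats 1000000 in
/-- In `T`, `(u0·u1·uβ)·t0·t1·(t0 + t1) = a0·a1·aβ`.  (The element `t0·t1·(t0+t1)` is
the image of the degree-3 Dickson invariant `p0 = t·t'·(t+t')` under `t ↦ t0`, `t' ↦ t1`.) -/
theorem dickson_p0_identity :
    algebraMap Aq T (aq (X 3 * X 4 * X 5)) * (t0 * t1 * (t0 + t1)) =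
      algebraMap Aq T (aq (X 0 * X 1 * X 2)) := by
  have h2 : (2 : T) = 0 := by
    have h : (2 : A6) = 0 := CharTwo.two_eq_zero
    have := congrArg (fun x => algebraMap Aq T (aq x)) h
    simpa only [map_ofNat, map_zero] using this
  have hq : aq qrel = 0 :=
    Ideal.Quotient.eq_zero_iff_mem.mpr (Ideal.subset_span (Set.mem_singleton _))
  have hq' := congrArg (algebraMap Aq T) hq
  simp only [qrel, map_add, map_mul, map_zero] at hq'
  have h0 : IsUnit (algebraMap Aq T (aq (X 3))) := IsLocalization.map_units T u0S
  have hb : IsUnit (algebraMap Aq T (aq (X 5))) := IsLocalization.map_units T uβS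
  have e0 : t0 * algebraMap Aq T (aq (X 3)) = algebraMap Aq T (aq (X 0)) := by
    rw [t0, Localization.mk_eq_mk']
    exact IsLocalization.mk'_spec T (aq (X 0)) u0S
  have e1 : t1 * algebraMap Aq T (aq (X 5)) = algebraMap Aq T (aq (X 2)) := by
    rw [t1, Localization.mk_eq_mk']
    exact IsLocalization.mk'_spec T (aq (X 2)) uβS
  simp only [map_mul]
  exact dickson_aux (R := T) h2 (algebraMap Aq T (aq (X 0))) (algebraMap Aq T (aq (X 1)))
    (algebraMap Aq T (aq (X 2))) (algebraMap Aq T (aq (X 3))) (algebraMap Aq T (aq (X 4)))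
    (algebraMap Aq T (aq (X 5))) t0 t1 h0 hb e0 e1 hq'

end
end
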